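/- Let ρ = |ψ⟩⟨ψ| be an n-qubit pure state and S ⊆ Fin n nonempty with |S| = s, and let P(q) = tr(ρ |Φ̃_q⟩⟨Φ̃_q|), q ∈ {1,2,3,4}^S, be the product SIC-POVM outcome distribution. Fix ε > 0 and δ ∈ (0,1), set N_B = ⌈8 log(1/δ)⌉ and B = ⌈4·3^s/ε²⌉, and let Q₁, …, Q_{2 N_B B} be i.i.d. with distribution P. For each batch b ∈ {1,…,N_B}, define C̄^(b) = 1 − 3^s · (1/B) Σ_{i=(b−1)B+1}^{bB} 1{Q_{2i−1} = Q_{2i}}. Then P( |median(C̄^(1), …, C̄^(N_B)) − C_ψ(S)| ≥ ε ) ≤ δ. -/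

import Mathlib

open Matrix MeasureTheory
open scoped BigOperators ComplexConjugate Kronecker

/-- `n`-qubit operators: matrices indexed by functions `Fin n → Fin 2`. -/
abbrev QMat (n : ℕ) : Type := Matrix (Fin n → Fin 2) (Fin n → Fin 2) ℂ

/-- Combine an assignment on `α` and one on its complement into a full index. -/
noncomputable def embedIdx {n : ℕ} (α : Finset (Fin n)) (i : {x : Fin n // x ∈ α} → Fin 2)
    (k : {x : Fin n // x ∉ α} → Fin 2) : Fin n → Fin 2 :=
  fun x => if h : x ∈ α then i ⟨x, h⟩ else k ⟨x, h⟩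

/-- The reduced density matrix on the qubits in `α` (partial trace over the rest). -/
noncomputable def reduced {n : ℕ} (ρ : QMat n) (α : Finset (Fin n)) :
    Matrix ({x : Fin n // x ∈ α} → Fin 2) ({x : Fin n // x ∈ α} → Fin 2) ℂ :=
  fun i j => ∑ k : ({x : Fin n // x ∉ α} → Fin 2), ρ (embedIdx α i k) (embedIdx α j k)

/-- The concentratable entanglement `C_ψ(S) = 1 - 2^{-|S|} ∑_{α ⊆ S} tr(ρ_α²)`. -/
noncomputable def CE {n : ℕ} (ρ : QMat n) (S : Finset (Fin n)) : ℝ :=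
  1 - (1 / 2 : ℝ) ^ S.card *
    ∑ α ∈ S.powerset, (Matrix.trace (reduced ρ α * reduced ρ α)).re

/-- Tensor product of single-qubit operators on the qubits in `S`, identity elsewhere. -/
noncomputable def localOp {n : ℕ} (S : Finset (Fin n))
    (V : {i : Fin n // i ∈ S} → Matrix (Fin 2) (Fin 2) ℂ) : QMat n :=
  fun x y => ∏ i : Fin n,
    if h : i ∈ S then V ⟨i, h⟩ (x i) (y i)
    else (if x i = y i then 1 else 0)

/-- The four SIC vectors `φ₁, …, φ₄` in `ℂ²`. -/
noncomputable def sicVec : Fin 4 → Fin 2 → ℂ :=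
  ![![1, 0],
    ![((1 / Real.sqrt 3 : ℝ) : ℂ), ((Real.sqrt (2/3) : ℝ) : ℂ)],
    ![((1 / Real.sqrt 3 : ℝ) : ℂ),
      ((Real.sqrt (2/3) : ℝ) : ℂ) * Complex.exp (2 * Real.pi * Complex.I / 3)],
    ![((1 / Real.sqrt 3 : ℝ) : ℂ),
      ((Real.sqrt (2/3) : ℝ) : ℂ) * Complex.exp (4 * Real.pi * Complex.I / 3)]]

/-- The rescaled SIC-POVM vectors `φ̃ᵢ = φᵢ/√2`. -/
noncomputable def sicTilde (i : Fin 4) : Fin 2 → ℂ :=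
  fun a => sicVec i a / ((Real.sqrt 2 : ℝ) : ℂ)

/-- The product SIC-POVM element `|Φ̃_q⟩⟨Φ̃_q| = ⊗_{i∈S} |φ̃_{qᵢ}⟩⟨φ̃_{qᵢ}|` on the qubits
in `S`, identity elsewhere. -/
noncomputable def sicProj {n : ℕ} (S : Finset (Fin n))
    (q : {i : Fin n // i ∈ S} → Fin 4) : QMat n :=
  localOp S (fun i => Matrix.vecMulVec (sicTilde (q i)) (star (sicTilde (q i))))

/-- The SIC-POVM outcome probability `P(q) = tr(ρ |Φ̃_q⟩⟨Φ̃_q|)`. -/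
noncomputable def sicBorn {n : ℕ} (ρ : QMat n) (S : Finset (Fin n))
    (q : {i : Fin n // i ∈ S} → Fin 4) : ℝ :=
  (Matrix.trace (ρ * sicProj S q)).re

/-- The product SIC-POVM outcome distribution, as a measure on `{1,2,3,4}^S`. -/
noncomputable def sicMeasure {n : ℕ} (ρ : QMat n) (S : Finset (Fin n)) :
    Measure ({i : Fin n // i ∈ S} → Fin 4) :=
  ∑ q : ({i : Fin n // i ∈ S} → Fin 4), ENNReal.ofReal (sicBorn ρ S q) • Measure.dirac q

/-- `m₀` is a median of `x₁, …, x_m`: at least half of the `xᵢ` satisfy `xᵢ ≤ m₀` and at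
least half satisfy `xᵢ ≥ m₀`. -/
def IsMedian {m : ℕ} (x : Fin m → ℝ) (m₀ : ℝ) : Prop :=
  m ≤ 2 * (Finset.univ.filter fun i => x i ≤ m₀).card ∧
  m ≤ 2 * (Finset.univ.filter fun i => m₀ ≤ x i).card

/-!
For the single-qubit SIC-POVM, `∑ᵢ Eᵢ ⊗ Eᵢ = (1 + SWAP) / 6`. Tensoring over the qubits of `S` and
expanding the product gives `∑_q P(q)² = 6^{-s} ∑_{α ⊆ S} tr((ρ ⊗ ρ) SWAP_α) =
6^{-s} ∑_{α ⊆ S} tr(ρ_α²)`, so `C(S) = 1 - 3^s ∑_q P(q)²` is an affine function of the collision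
probability of `P`, and the observed collisions estimate it without bias. Because `SWAP_α ≤ 1`, the
purities are at most `1`, hence `3^s ∑_q P(q)² ≤ 1` and a batch mean has variance at most
`3^s / B ≤ ε² / 4`. By Chebyshev a batch is `ε`-far from `C(S)` with probability at most `1/4`. A
median that is `ε`-far forces at least half of the batches to be `ε`-far, which by Hoeffding has
probability at most `exp (-N_B / 8) ≤ δ`.
-/

section MedianOfMeans

open ProbabilityTheory

variable {Ω : Type*} {mΩ : MeasurableSpace Ω} {μ : Measure Ω}

theorem IsMedian.le_two_mul_card_filter_le_abs_sub {m : ℕ} {x : Fin m → ℝ} {m₀ c ε : ℝ}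
    (h : IsMedian x m₀) (hc : ε ≤ |m₀ - c|) :
    m ≤ 2 * (Finset.univ.filter fun i => ε ≤ |x i - c|).card := by
  rcases le_abs.mp hc with hright | hleft
  · refine h.2.trans (Nat.mul_le_mul_left 2 (Finset.card_le_card ?_))
    exact Finset.monotone_filter_right _ fun i _ hi => le_abs.mpr (Or.inl (by linarith))
  · refine h.1.trans (Nat.mul_le_mul_left 2 (Finset.card_le_card ?_))
    exact Finset.monotone_filter_right _ fun i _ hi => le_abs.mpr (Or.inr (by linarith))

open Classical in
theorem measureReal_card_le_two_mul_card_filter_mem_le {ι : Type*} [Fintype ι]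
    {A : ι → Set Ω} (hA : ∀ i, MeasurableSet (A i)) (hindep : iIndepSet A μ)
    (hμA : ∀ i, μ.real (A i) ≤ 1 / 4) :
    μ.real {ω | Fintype.card ι ≤ 2 * (Finset.univ.filter fun i => ω ∈ A i).card}
      ≤ Real.exp (-(Fintype.card ι / 8)) := by
  have := hindep.isProbabilityMeasure
  let Y : ι → Ω → ℝ := fun i ω => (A i).indicator 1 ω - ∫ ω', (A i).indicator (1 : Ω → ℝ) ω' ∂μ
  have hYindep : iIndepFun Y μ :=
    hindep.iIndepFun_indicator.comp (fun i y => y - ∫ ω', (A i).indicator (1 : Ω → ℝ) ω' ∂μ)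
      fun i => measurable_id.sub_const _
  have hYsubG : ∀ i ∈ Finset.univ, HasSubgaussianMGF (Y i) ((‖(1 : ℝ) - 0‖₊ / 2) ^ 2) μ :=
    fun i _ => hasSubgaussianMGF_of_mem_Icc
      (measurable_const.indicator (hA i)).aemeasurable
      (Filter.Eventually.of_forall fun ω =>
        ⟨Set.indicator_nonneg (fun _ _ => zero_le_one) ω,
          Set.indicator_le_self' (fun _ _ => zero_le_one) ω⟩)
  have hsum : ∀ ω, Fintype.card ι ≤ 2 * (Finset.univ.filter fun i => ω ∈ A i).card →
      (Fintype.card ι / 4 : ℝ) ≤ ∑ i, Y i ω := by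
    intro ω hω
    have hω' : (Fintype.card ι : ℝ) ≤ 2 * (Finset.univ.filter fun i => ω ∈ A i).card := by
      exact_mod_cast hω
    have hcount : ∑ i, (A i).indicator (1 : Ω → ℝ) ω
        = (Finset.univ.filter fun i => ω ∈ A i).card := by
      simp [Set.indicator_apply]
    have hmean : ∑ i, ∫ ω', (A i).indicator (1 : Ω → ℝ) ω' ∂μ ≤ Fintype.card ι / 4 := by
      simpa [integral_indicator_one, hA, div_eq_mul_inv]
        using Finset.sum_le_sum fun i (_ : i ∈ Finset.univ) => hμA i
    simp only [Y, Finset.sum_sub_distrib]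
    linarith
  calc μ.real {ω | Fintype.card ι ≤ 2 * (Finset.univ.filter fun i => ω ∈ A i).card}
      ≤ μ.real {ω | (Fintype.card ι / 4 : ℝ) ≤ ∑ i, Y i ω} := measureReal_mono hsum
    _ ≤ Real.exp (-(Fintype.card ι / 4 : ℝ) ^ 2 /
          (2 * (∑ _i : ι, (‖(1 : ℝ) - 0‖₊ / 2) ^ 2 : NNReal))) :=
        HasSubgaussianMGF.measure_sum_ge_le_of_iIndepFun hYindep hYsubG (by positivity)
    _ = Real.exp (-(Fintype.card ι / 8)) := by
        congr 1
        rcases eq_or_ne (Fintype.card ι) 0 with h0 | h0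
        · simp [h0]
        · push_cast
          simp only [sub_zero, Finset.sum_const, Finset.card_univ, nsmul_eq_mul]
          field_simp
          norm_num

theorem measureReal_abs_median_sub_ge_le {N : ℕ} {X : Fin N → Ω → ℝ} {m : Ω → ℝ} {c ε : ℝ}
    (hX : ∀ b, Measurable (X b)) (hindep : iIndepFun X μ)
    (hdev : ∀ b, μ.real {ω | ε ≤ |X b ω - c|} ≤ 1 / 4)
    (hm : ∀ ω, IsMedian (fun b => X b ω) (m ω)) :
    μ.real {ω | ε ≤ |m ω - c|} ≤ Real.exp (-(N / 8)) := by
  classical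
  have := hindep.isProbabilityMeasure
  have hdevSet : MeasurableSet {y : ℝ | ε ≤ |y - c|} :=
    measurableSet_le measurable_const (by fun_prop)
  have hindepSet : iIndepSet (fun b => X b ⁻¹' {y | ε ≤ |y - c|}) μ :=
    (iIndepSet_iff_meas_biInter fun b => hX b hdevSet).2 fun s =>
      hindep.measure_inter_preimage_eq_mul s fun _ _ => hdevSet
  calc μ.real {ω | ε ≤ |m ω - c|}
      ≤ μ.real {ω | Fintype.card (Fin N) ≤
          2 * (Finset.univ.filter fun b => ω ∈ X b ⁻¹' {y | ε ≤ |y - c|}).card} :=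
        measureReal_mono fun ω hω => by
          simpa using (hm ω).le_two_mul_card_filter_le_abs_sub hω
    _ ≤ Real.exp (-(N / 8)) := by
        simpa using measureReal_card_le_two_mul_card_filter_mem_le
          (fun b => hX b hdevSet) hindepSet hdev

theorem iIndepFun_curry {ι κ 𝓧 : Type*} [MeasurableSpace 𝓧] [Countable ι] [Countable κ]
    {X : ι × κ → Ω → 𝓧} (hX : ∀ p, Measurable (X p)) (hindep : iIndepFun X μ) :
    iIndepFun (fun i ω k => X (i, k) ω) μ := by
  have := hindep.isProbabilityMeasure
  have hrow : ∀ i, iIndepFun (fun k => X (i, k)) μ := fun i =>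
    hindep.precomp (Prod.mk_right_injective i)
  rw [iIndepFun_iff_map_fun_eq_infinitePi_map fun i => measurable_pi_lambda _ fun k => hX (i, k)]
  calc μ.map (fun ω i k => X (i, k) ω)
      = (μ.map fun ω p => X p ω).map (MeasurableEquiv.curry ι κ 𝓧) :=
        (Measure.map_map (MeasurableEquiv.curry ι κ 𝓧).measurable
          (measurable_pi_lambda (fun ω p => X p ω) hX)).symm
    _ = Measure.infinitePi fun i => Measure.infinitePi fun k => μ.map (X (i, k)) := by
        rw [hindep.map_fun_eq_infinitePi_map hX]
        have hprob : ∀ i k, IsProbabilityMeasure (μ.map (X (i, k))) := fun i k =>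
          Measure.isProbabilityMeasure_map (hX (i, k)).aemeasurable
        exact Measure.infinitePi_map_curry fun i k => μ.map (X (i, k))
    _ = Measure.infinitePi fun i => μ.map fun ω k => X (i, k) ω := by
        congr! 2 with i
        exact ((hrow i).map_fun_eq_infinitePi_map fun k => hX (i, k)).symm

section CollisionEstimate

/-- The estimate `1 - D · (fraction of colliding pairs)` of `1 - D · ∑ q, ν{q}²` computed from `B`
pairs `(z (i, 0), z (i, 1))` of samples from `ν`. -/
noncomputable def collisionEstimate {α : Type*} [DecidableEq α] {B : ℕ} (D : ℝ)
    (z : Fin B × Fin 2 → α) : ℝ :=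
  1 - D * ((1 / (B : ℝ)) * ∑ i : Fin B, if z (i, 0) = z (i, 1) then 1 else 0)

variable {α : Type*} [MeasurableSpace α] {B : ℕ} {Q : Fin B × Fin 2 → Ω → α}

section Countable

variable [Countable α] [MeasurableSingletonClass α] [DecidableEq α]

theorem iIndepFun_ite_eq (hQ : ∀ p, Measurable (Q p)) (hindep : iIndepFun Q μ) :
    iIndepFun (fun i ω => (if Q (i, 0) ω = Q (i, 1) ω then 1 else 0 : ℝ)) μ :=
  (iIndepFun_curry hQ hindep).comp (fun _ z => if z 0 = z 1 then 1 else 0)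
    fun _ => measurable_of_countable _

theorem memLp_ite_eq [IsFiniteMeasure μ] {X Y : Ω → α} (hX : AEMeasurable X μ)
    (hY : AEMeasurable Y μ) : MemLp (fun ω => (if X ω = Y ω then 1 else 0 : ℝ)) 2 μ := by
  have hmeas : AEMeasurable (fun ω => (if X ω = Y ω then 1 else 0 : ℝ)) μ :=
    (measurable_of_countable fun p : α × α => if p.1 = p.2 then (1 : ℝ) else 0).comp_aemeasurable
      (hX.prodMk hY)
  refine MemLp.of_bound hmeas.aestronglyMeasurable 1 (Filter.Eventually.of_forall fun ω => ?_)
  split_ifs <;> simp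

end Countable

variable [Fintype α] {ν : Measure α}

/-- The probability `∑ q, ν{q}²` that two independent samples from `ν` coincide. -/
noncomputable def collisionProb (ν : Measure α) : ℝ :=
  ∑ q, ν.real {q} ^ 2

variable [MeasurableSingletonClass α] [DecidableEq α]

theorem integral_ite_eq_collisionProb [IsFiniteMeasure μ] {X Y : Ω → α}
    (hX : HasLaw X ν μ) (hY : HasLaw Y ν μ) (hXY : IndepFun X Y μ) :
    ∫ ω, (if X ω = Y ω then 1 else 0 : ℝ) ∂μ = collisionProb ν := by
  have hν : IsFiniteMeasure ν := hX.map_eq ▸ inferInstance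
  calc ∫ ω, (if X ω = Y ω then 1 else 0 : ℝ) ∂μ
      = ∫ p, (if p.1 = p.2 then 1 else 0 : ℝ) ∂ν.prod ν :=
        (hXY.hasLaw_prod hX hY).integral_comp (f := fun p => if p.1 = p.2 then (1 : ℝ) else 0)
          (measurable_of_finite _).aestronglyMeasurable
    _ = ∑ q, ν.real {q} ^ 2 := by
        rw [integral_fintype .of_finite, Fintype.sum_prod_type]
        simp [← Set.singleton_prod_singleton, measureReal_prod_prod, sq]

theorem variance_ite_eq_le_collisionProb [IsProbabilityMeasure μ] {X Y : Ω → α} (hX : HasLaw X ν μ)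
    (hY : HasLaw Y ν μ) (hXY : IndepFun X Y μ) :
    variance (fun ω => (if X ω = Y ω then 1 else 0 : ℝ)) μ ≤ collisionProb ν := by
  refine (variance_le_expectation_sq (memLp_ite_eq hX.aemeasurable hY.aemeasurable).1).trans_eq ?_
  rw [← integral_ite_eq_collisionProb hX hY hXY]
  congr! 2 with ω
  split_ifs <;> simp [*]

theorem integral_collisionEstimate (hB : B ≠ 0) (hlaw : ∀ p, HasLaw (Q p) ν μ)
    (hindep : iIndepFun Q μ) (D : ℝ) :
    ∫ ω, collisionEstimate D (fun p => Q p ω) ∂μ = 1 - D * collisionProb ν := by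
  have := hindep.isProbabilityMeasure
  have hint : ∀ i : Fin B, Integrable (fun ω => if Q (i, 0) ω = Q (i, 1) ω then (1 : ℝ) else 0) μ :=
    fun i => (memLp_ite_eq (hlaw _).aemeasurable (hlaw _).aemeasurable).integrable one_le_two
  have hpair : ∀ i : Fin B,
      ∫ ω, (if Q (i, 0) ω = Q (i, 1) ω then 1 else 0 : ℝ) ∂μ = collisionProb ν :=
    fun i => integral_ite_eq_collisionProb (hlaw _) (hlaw _) (hindep.indepFun (by simp))
  calc ∫ ω, collisionEstimate D (fun p => Q p ω) ∂μ
      = 1 - D * (1 / B * ∑ _i : Fin B, collisionProb ν) := by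
        simp only [collisionEstimate]
        rw [integral_sub (integrable_const _)
          (((integrable_finsetSum _ fun i _ => hint i).const_mul _).const_mul _),
          integral_const_mul, integral_const_mul, integral_finsetSum _ fun i _ => hint i]
        simp [hpair]
    _ = 1 - D * collisionProb ν := by simp [hB]

theorem variance_collisionEstimate_le (hQ : ∀ p, Measurable (Q p))
    (hlaw : ∀ p, HasLaw (Q p) ν μ) (hindep : iIndepFun Q μ) (D : ℝ) :
    variance (fun ω => collisionEstimate D (fun p => Q p ω)) μ ≤ D ^ 2 * collisionProb ν / B := by
  have := hindep.isProbabilityMeasure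
  let Z : Fin B → Ω → ℝ := fun i ω => if Q (i, 0) ω = Q (i, 1) ω then 1 else 0
  have hZ : ∀ i, MemLp (Z i) 2 μ := fun i =>
    memLp_ite_eq (hlaw _).aemeasurable (hlaw _).aemeasurable
  have hZindep : Set.Pairwise (Finset.univ : Finset (Fin B)) fun i j => IndepFun (Z i) (Z j) μ :=
    fun i _ j _ hij => (iIndepFun_ite_eq hQ hindep).indepFun hij
  have hZvar : ∀ i, variance (Z i) μ ≤ collisionProb ν := fun i =>
    variance_ite_eq_le_collisionProb (hlaw _) (hlaw _) (hindep.indepFun (by simp))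
  calc variance (fun ω => collisionEstimate D (fun p => Q p ω)) μ
      = variance (fun ω => 1 - D * (1 / B * (∑ i, Z i) ω)) μ := by
        simp only [collisionEstimate, Z, Finset.sum_apply]
    _ = D ^ 2 * ((1 / B) ^ 2 * ∑ i, variance (Z i) μ) := by
        rw [variance_const_sub (((memLp_finsetSum' _ fun i _ => hZ i).1.const_mul _).const_mul _),
          variance_const_mul, variance_const_mul, IndepFun.variance_sum (fun i _ => hZ i) hZindep]
    _ ≤ D ^ 2 * ((1 / B) ^ 2 * ∑ _i : Fin B, collisionProb ν) := by
        gcongr with i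
        exact hZvar i
    _ = D ^ 2 * collisionProb ν / B := by
        rw [Finset.sum_const, Finset.card_univ, Fintype.card_fin, nsmul_eq_mul]
        rcases eq_or_ne (B : ℝ) 0 with hB | hB
        · simp [hB]
        · field_simp

theorem measureReal_abs_collisionEstimate_sub_ge_le {D ε : ℝ} (hD : 0 < D)
    (hε : 0 < ε) (hB : 4 * D / ε ^ 2 ≤ B) (hDν : D * collisionProb ν ≤ 1)
    (hQ : ∀ p, Measurable (Q p)) (hlaw : ∀ p, HasLaw (Q p) ν μ) (hindep : iIndepFun Q μ) :
    μ.real {ω | ε ≤ |collisionEstimate D (fun p => Q p ω) - (1 - D * collisionProb ν)|} ≤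
      1 / 4 := by
  have := hindep.isProbabilityMeasure
  have hBpos : (0 : ℝ) < B := lt_of_lt_of_le (by positivity) hB
  have hLp : MemLp (fun ω => collisionEstimate D (fun p => Q p ω)) 2 μ :=
    (memLp_const 1).sub (((memLp_finsetSum _ fun i _ =>
      memLp_ite_eq (hlaw _).aemeasurable (hlaw _).aemeasurable).const_mul _).const_mul _)
  have hvar : variance (fun ω => collisionEstimate D (fun p => Q p ω)) μ / ε ^ 2 ≤ 1 / 4 := by
    calc variance (fun ω => collisionEstimate D (fun p => Q p ω)) μ / ε ^ 2
        ≤ D ^ 2 * collisionProb ν / B / ε ^ 2 := by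
          gcongr
          exact variance_collisionEstimate_le hQ hlaw hindep D
      _ = D * (D * collisionProb ν) / (B * ε ^ 2) := by ring
      _ ≤ D * 1 / (B * ε ^ 2) := by gcongr
      _ ≤ 1 / 4 := by
          rw [div_le_iff₀ (by positivity)] at hB ⊢
          linarith
  have hcheb := meas_ge_le_variance_div_sq hLp hε
  rw [integral_collisionEstimate (by exact_mod_cast hBpos.ne') hlaw hindep D] at hcheb
  exact ENNReal.toReal_le_of_le_ofReal (by norm_num) (hcheb.trans (ENNReal.ofReal_le_ofReal hvar))

theorem measureReal_abs_median_collisionEstimate_sub_ge_le {N : ℕ}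
    {Q : Fin N × Fin B × Fin 2 → Ω → α} {m : Ω → ℝ} {D ε : ℝ} (hD : 0 < D)
    (hε : 0 < ε) (hB : 4 * D / ε ^ 2 ≤ B) (hDν : D * collisionProb ν ≤ 1)
    (hQ : ∀ p, Measurable (Q p)) (hlaw : ∀ p, HasLaw (Q p) ν μ) (hindep : iIndepFun Q μ)
    (hm : ∀ ω, IsMedian (fun b => collisionEstimate D fun p => Q (b, p) ω) (m ω)) :
    μ.real {ω | ε ≤ |m ω - (1 - D * collisionProb ν)|} ≤ Real.exp (-(N / 8)) := by
  have hest : Measurable (collisionEstimate D : (Fin B × Fin 2 → α) → ℝ) := measurable_of_finite _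
  exact measureReal_abs_median_sub_ge_le
    (fun b => hest.comp (measurable_pi_lambda _ fun p => hQ (b, p)))
    ((iIndepFun_curry hQ hindep).comp (fun _ => collisionEstimate D) fun _ => hest)
    (fun b => measureReal_abs_collisionEstimate_sub_ge_le hD hε hB hDν (fun p => hQ (b, p))
      (fun p => hlaw (b, p)) (hindep.precomp (Prod.mk_right_injective b)))
    hm

end CollisionEstimate

end MedianOfMeans

section LocalOperators

variable {n : ℕ} {S : Finset (Fin n)}

/-- The single-qubit operator that `localOp S V` applies to qubit `i`. -/
noncomputable def localFactor (S : Finset (Fin n))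
    (V : {i : Fin n // i ∈ S} → Matrix (Fin 2) (Fin 2) ℂ) (i : Fin n) : Matrix (Fin 2) (Fin 2) ℂ :=
  if h : i ∈ S then V ⟨i, h⟩ else 1

theorem localOp_apply (V : {i : Fin n // i ∈ S} → Matrix (Fin 2) (Fin 2) ℂ)
    (x y : Fin n → Fin 2) : localOp S V x y = ∏ i, localFactor S V i (x i) (y i) :=
  Finset.prod_congr rfl fun i _ => by
    rw [localFactor]
    split_ifs <;> simp_all [Matrix.one_apply]

theorem localOp_apply_eq_prod_mul_prod (V : {i : Fin n // i ∈ S} → Matrix (Fin 2) (Fin 2) ℂ)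
    (x y : Fin n → Fin 2) :
    localOp S V x y = (∏ i : {i : Fin n // i ∈ S}, V i (x i) (y i)) *
      ∏ i : {i : Fin n // i ∉ S}, if x i = y i then 1 else 0 := by
  convert! Fintype.prod_dite _ _

theorem localOp_mul (V W : {i : Fin n // i ∈ S} → Matrix (Fin 2) (Fin 2) ℂ) :
    localOp S V * localOp S W = localOp S (V * W) := by
  have hfactor : ∀ i, localFactor S (V * W) i = localFactor S V i * localFactor S W i := by
    intro i
    simp only [localFactor]
    split_ifs <;> simp
  ext x y
  simp only [Matrix.mul_apply, localOp_apply, hfactor, Fintype.prod_sum, Finset.prod_mul_distrib]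

theorem localOp_conjTranspose (V : {i : Fin n // i ∈ S} → Matrix (Fin 2) (Fin 2) ℂ) :
    (localOp S V)ᴴ = localOp S fun i => (V i)ᴴ := by
  have hfactor : ∀ i, localFactor S (fun i => (V i)ᴴ) i = (localFactor S V i)ᴴ := by
    intro i
    simp only [localFactor]
    split_ifs <;> simp
  ext x y
  simp only [Matrix.conjTranspose_apply, localOp_apply, hfactor, star_prod]

theorem localOp_one : localOp S (fun _ => 1) = 1 := by
  ext x y
  rw [localOp_apply]
  simp [localFactor, Matrix.one_apply, Finset.prod_boole, funext_iff]

theorem sum_localOp {J : Type*} [Fintype J] (V : J → Matrix (Fin 2) (Fin 2) ℂ) :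
    ∑ q : {i : Fin n // i ∈ S} → J, localOp S (V ∘ q) = localOp S fun _ => ∑ j, V j := by
  ext x y
  simp only [Matrix.sum_apply, localOp_apply_eq_prod_mul_prod, ← Finset.sum_mul,
    Function.comp_apply, Fintype.prod_sum]

open scoped ComplexOrder MatrixOrder in
theorem localOp_posSemidef {V : {i : Fin n // i ∈ S} → Matrix (Fin 2) (Fin 2) ℂ}
    (hV : ∀ i, (V i).PosSemidef) : (localOp S V).PosSemidef := by
  choose A hA using fun i => CStarAlgebra.nonneg_iff_eq_star_mul_self.mp (hV i).nonneg
  have hfactor : localOp S V = (localOp S A)ᴴ * localOp S A := by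
    rw [localOp_conjTranspose, localOp_mul]
    exact congrArg _ (funext hA)
  exact hfactor ▸ Matrix.posSemidef_conjTranspose_mul_self _

end LocalOperators

section PartialSwap

/-- The permutation of `(ι → X) × (ι → X)` exchanging the coordinates in `α` of the two
assignments; its permutation matrix is the swap operator on the tensor factors in `α` of two
copies of a system. -/
def partialSwap {ι X : Type*} [DecidableEq ι] (α : Finset ι) :
    Equiv.Perm ((ι → X) × (ι → X)) :=
  Function.Involutive.toPerm (fun p => (α.piecewise p.2 p.1, α.piecewise p.1 p.2)) fun p => by
    ext i <;> by_cases h : i ∈ α <;> simp [h]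

theorem partialSwap_symm {ι X : Type*} [DecidableEq ι] (α : Finset ι) :
    (partialSwap α : Equiv.Perm ((ι → X) × (ι → X))).symm = partialSwap α :=
  Function.Involutive.toPerm_symm _

theorem permMatrix_partialSwap_apply {ι X : Type*} [DecidableEq ι] [Fintype ι] [DecidableEq X]
    (α : Finset ι) (x x' y y' : ι → X) :
    (partialSwap α).permMatrix ℂ (x, x') (y, y') =
      (∏ i ∈ α, if x i = y' i ∧ x' i = y i then 1 else 0) *
        ∏ i ∈ αᶜ, if x i = y i ∧ x' i = y' i then 1 else 0 := by
  rw [Equiv.Perm.permMatrix, PEquiv.toMatrix_apply, Finset.prod_boole, Finset.prod_boole,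
    ite_zero_mul_ite_zero, mul_one]
  simp only [Equiv.toPEquiv_apply, Option.mem_some_iff]
  congr 1
  rw [eq_iff_iff]
  change (α.piecewise x' x, α.piecewise x x') = (y, y') ↔ _
  simp only [Prod.mk.injEq, funext_iff, ← forall_and, Finset.mem_compl]
  refine forall_congr' fun i => ?_
  by_cases h : i ∈ α <;> simp [h, and_comm]

variable {n : ℕ}

theorem sum_eq_sum_embedIdx {M : Type*} [AddCommMonoid M] (α : Finset (Fin n))
    (f : (Fin n → Fin 2) → M) : ∑ x, f x = ∑ i, ∑ k, f (embedIdx α i k) := by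
  rw [← Fintype.sum_prod_type']
  exact (Fintype.sum_equiv (Equiv.piEquivPiSubtypeProd (· ∈ α) fun _ => Fin 2).symm _ _
    fun _ => rfl).symm

theorem piecewise_embedIdx (α : Finset (Fin n)) (i j : {x : Fin n // x ∈ α} → Fin 2)
    (k l : {x : Fin n // x ∉ α} → Fin 2) :
    α.piecewise (embedIdx α i k) (embedIdx α j l) = embedIdx α i l := by
  ext x
  by_cases h : x ∈ α <;> simp [embedIdx, h]

theorem trace_kronecker_mul_partialSwap (ρ : QMat n) (α : Finset (Fin n)) :
    ((ρ ⊗ₖ ρ) * (partialSwap α).permMatrix ℂ).trace = (reduced ρ α * reduced ρ α).trace := by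
  calc ((ρ ⊗ₖ ρ) * (partialSwap α).permMatrix ℂ).trace
      = ∑ x, ∑ x', ρ x (α.piecewise x' x) * ρ x' (α.piecewise x x') := by
        rw [PEquiv.mul_toMatrix_toPEquiv, partialSwap_symm, Matrix.trace, Fintype.sum_prod_type]
        rfl
    _ = ∑ i, ∑ k, ∑ j, ∑ l, ρ (embedIdx α i k) (embedIdx α j k) *
          ρ (embedIdx α j l) (embedIdx α i l) := by
        simp only [sum_eq_sum_embedIdx α, piecewise_embedIdx]
    _ = (reduced ρ α * reduced ρ α).trace := by
        simp only [Matrix.trace, Matrix.diag_apply, Matrix.mul_apply, reduced, Finset.sum_mul_sum]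
        exact Finset.sum_congr rfl fun i _ => Finset.sum_comm

end PartialSwap

section TwoDesign

variable {n : ℕ} {J : Type*} [Fintype J] {V : J → Matrix (Fin 2) (Fin 2) ℂ} {c : ℂ}

theorem sum_localOp_kronecker_localOp (S : Finset (Fin n))
    (hV : ∑ j, V j ⊗ₖ V j = c • (1 + (Equiv.prodComm (Fin 2) (Fin 2)).toPEquiv.toMatrix)) :
    ∑ q : {i : Fin n // i ∈ S} → J, localOp S (V ∘ q) ⊗ₖ localOp S (V ∘ q) =
      c ^ S.card • ∑ α ∈ S.powerset, (partialSwap α).permMatrix ℂ := by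
  have hVapply : ∀ a b a' b' : Fin 2, ∑ j, V j a b * V j a' b' =
      c * ((if a = b' ∧ a' = b then 1 else 0) + if a = b ∧ a' = b' then 1 else 0) := by
    intro a b a' b'
    have hentry := congrFun (congrFun hV (a, a')) (b, b')
    simpa [Matrix.sum_apply, PEquiv.toMatrix_apply, Matrix.one_apply, and_comm, add_comm]
      using hentry
  ext ⟨x, x'⟩ ⟨y, y'⟩
  let swapped : Fin n → ℂ := fun i => if x i = y' i ∧ x' i = y i then 1 else 0
  let fixed : Fin n → ℂ := fun i => if x i = y i ∧ x' i = y' i then 1 else 0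
  calc (∑ q : {i : Fin n // i ∈ S} → J, localOp S (V ∘ q) ⊗ₖ localOp S (V ∘ q)) (x, x') (y, y')
      = (∏ i : {i : Fin n // i ∈ S}, ∑ j, V j (x i) (y i) * V j (x' i) (y' i)) *
          ∏ i : {i : Fin n // i ∉ S}, fixed i := by
        simp only [Matrix.sum_apply, Matrix.kronecker_apply, localOp_apply_eq_prod_mul_prod,
          Function.comp_apply, Fintype.prod_sum, Finset.sum_mul]
        refine Finset.sum_congr rfl fun q _ => ?_
        rw [mul_mul_mul_comm, ← Finset.prod_mul_distrib, ← Finset.prod_mul_distrib]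
        simp only [fixed, ite_zero_mul_ite_zero, mul_one]
    _ = c ^ S.card * ((∏ i ∈ S, (swapped i + fixed i)) * ∏ i ∈ Sᶜ, fixed i) := by
        simp only [hVapply, Finset.prod_mul_distrib, Finset.prod_const, Finset.card_univ,
          Fintype.card_coe]
        rw [mul_assoc, Finset.prod_coe_sort S fun i => swapped i + fixed i,
          Finset.prod_subtype Sᶜ (fun i => Finset.mem_compl)]
    _ = c ^ S.card * ∑ α ∈ S.powerset, (∏ i ∈ α, swapped i) * ∏ i ∈ αᶜ, fixed i := by
        rw [Finset.prod_add, Finset.sum_mul]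
        refine congrArg _ (Finset.sum_congr rfl fun α hα => ?_)
        rw [mul_assoc, ← compl_sdiff_compl,
          Finset.prod_sdiff (Finset.compl_subset_compl.mpr (Finset.mem_powerset.mp hα))]
    _ = (c ^ S.card • ∑ α ∈ S.powerset, (partialSwap α).permMatrix ℂ) (x, x') (y, y') := by
        simp only [Matrix.smul_apply, Matrix.sum_apply, permMatrix_partialSwap_apply, smul_eq_mul,
          swapped, fixed]

theorem sum_trace_mul_localOp_sq (ρ : QMat n) (S : Finset (Fin n))
    (hV : ∑ j, V j ⊗ₖ V j = c • (1 + (Equiv.prodComm (Fin 2) (Fin 2)).toPEquiv.toMatrix)) :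
    ∑ q : {i : Fin n // i ∈ S} → J, (ρ * localOp S (V ∘ q)).trace ^ 2 =
      c ^ S.card * ∑ α ∈ S.powerset, (reduced ρ α * reduced ρ α).trace := by
  calc ∑ q : {i : Fin n // i ∈ S} → J, (ρ * localOp S (V ∘ q)).trace ^ 2
      = ((ρ ⊗ₖ ρ) * ∑ q : {i : Fin n // i ∈ S} → J,
          localOp S (V ∘ q) ⊗ₖ localOp S (V ∘ q)).trace := by
        simp only [sq, ← Matrix.trace_kronecker, Matrix.mul_kronecker_mul,
          Matrix.mul_sum, Matrix.trace_sum]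
    _ = c ^ S.card * ∑ α ∈ S.powerset, (reduced ρ α * reduced ρ α).trace := by
        simp only [sum_localOp_kronecker_localOp S hV, Matrix.mul_smul, Matrix.trace_smul,
          Matrix.mul_sum, Matrix.trace_sum, trace_kronecker_mul_partialSwap, smul_eq_mul]

end TwoDesign

section SIC

/-- The single-qubit SIC-POVM element `|φ̃ᵢ⟩⟨φ̃ᵢ|`. -/
noncomputable def sicEffect (i : Fin 4) : Matrix (Fin 2) (Fin 2) ℂ :=
  vecMulVec (sicTilde i) (star (sicTilde i))

theorem exists_cube_root_eq_exp : ∃ w : ℂ, w ^ 2 = -1 - w ∧ star w = w ^ 2 ∧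
    Complex.exp (2 * Real.pi * Complex.I / 3) = w ∧
    Complex.exp (4 * Real.pi * Complex.I / 3) = w ^ 2 := by
  have hprim : IsPrimitiveRoot (Complex.exp (2 * Real.pi * Complex.I / 3)) 3 := by
    exact_mod_cast Complex.isPrimitiveRoot_exp 3 (by norm_num)
  have hsum := hprim.geom_sum_eq_zero (by norm_num)
  simp only [Finset.sum_range_succ, Finset.sum_range_zero, pow_zero, pow_one, zero_add] at hsum
  have hinv := Complex.inv_eq_conj (hprim.norm'_eq_one (by norm_num))
  refine ⟨_, by linear_combination hsum, ?_, rfl, ?_⟩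
  · rw [← starRingEnd_apply, ← hinv, inv_eq_iff_eq_inv]
    exact eq_inv_of_mul_eq_one_left ((pow_succ' _ 2).symm.trans hprim.pow_eq_one)
  · rw [← Complex.exp_nat_mul]
    congr 1
    push_cast
    ring

theorem exists_sicEffect_eq : ∃ c w : ℂ, c ^ 2 = 1 / 18 ∧ w ^ 2 = -1 - w ∧
    sicEffect = ![!![1 / 2, 0; 0, 0], !![1 / 6, c; c, 1 / 3],
      !![1 / 6, c * w ^ 2; c * w, 1 / 3], !![1 / 6, c * w; c * w ^ 2, 1 / 3]] := by
  obtain ⟨w, hw, hstar, hexp₁, hexp₂⟩ := exists_cube_root_eq_exp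
  have sqrt_sq : ∀ r : ℝ, 0 ≤ r → ((√r : ℝ) : ℂ) ^ 2 = r := fun r hr => by
    rw [← Complex.ofReal_pow, Real.sq_sqrt hr]
  obtain ⟨h2, h3, h23⟩ : ((√2 : ℝ) : ℂ) ^ 2 = 2 ∧ ((√3 : ℝ) : ℂ) ^ 2 = 3 ∧
      ((√(2 / 3) : ℝ) : ℂ) ^ 2 = 2 / 3 :=
    ⟨by simp [sqrt_sq], by simp [sqrt_sq], by simpa using sqrt_sq (2 / 3) (by norm_num)⟩
  have hw3 : w ^ 3 = 1 := by linear_combination (w - 1) * hw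
  have hne2 : ((√2 : ℝ) : ℂ) ≠ 0 := by simp
  have hne3 : ((√3 : ℝ) : ℂ) ≠ 0 := by simp
  refine ⟨(√(2 / 3) : ℝ) / (2 * (√3 : ℝ)), w, ?_, hw, ?_⟩
  · rw [div_pow, mul_pow, h3, h23]
    norm_num
  · rw [← starRingEnd_apply] at hstar
    ext i a b
    simp only [sicEffect, vecMulVec_apply, sicTilde, sicVec, hexp₁, hexp₂, Pi.star_apply,
      Complex.ofReal_div, Complex.ofReal_one]
    generalize hr : ((√2 : ℝ) : ℂ) = r at *
    generalize hs : ((√3 : ℝ) : ℂ) = s at *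
    generalize ht : ((√(2 / 3) : ℝ) : ℂ) = t at *
    have hrc : (starRingEnd ℂ) r = r := by rw [← hr, Complex.conj_ofReal]
    have hsc : (starRingEnd ℂ) s = s := by rw [← hs, Complex.conj_ofReal]
    have htc : (starRingEnd ℂ) t = t := by rw [← ht, Complex.conj_ofReal]
    fin_cases i <;> fin_cases a <;> fin_cases b <;>
      simp [hrc, hsc, htc, hstar] <;> field_simp <;> grind

theorem sum_sicEffect : ∑ i, sicEffect i = 1 := by
  obtain ⟨c, w, -, hw, htable⟩ := exists_sicEffect_eq
  ext a b
  rw [htable]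
  fin_cases a <;> fin_cases b <;> simp [Fin.sum_univ_four] <;> grind

theorem sum_sicEffect_kronecker : ∑ i, sicEffect i ⊗ₖ sicEffect i =
    (1 / 6 : ℂ) • (1 + (Equiv.prodComm (Fin 2) (Fin 2)).toPEquiv.toMatrix) := by
  obtain ⟨c, w, hc, hw, htable⟩ := exists_sicEffect_eq
  ext ⟨a, a'⟩ ⟨b, b'⟩
  rw [htable]
  fin_cases a <;> fin_cases a' <;> fin_cases b <;> fin_cases b' <;>
    simp [Fin.sum_univ_four, Matrix.sum_apply, PEquiv.toMatrix_apply] <;> grind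

end SIC

section Positivity

open scoped ComplexOrder

variable {ι : Type*}

open scoped MatrixOrder in
theorem trace_mul_nonneg_of_posSemidef [Fintype ι] {A B : Matrix ι ι ℂ} (hA : A.PosSemidef)
    (hB : B.PosSemidef) : 0 ≤ (A * B).trace := by
  classical
  obtain ⟨R, hR⟩ := CStarAlgebra.nonneg_iff_eq_star_mul_self.mp hB.nonneg
  rw [hR, ← mul_assoc, Matrix.trace_mul_comm, ← mul_assoc]
  exact (hA.mul_mul_conjTranspose_same R).trace_nonneg

theorem posSemidef_one_sub_permMatrix [Finite ι] [DecidableEq ι] {σ : Equiv.Perm ι}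
    (hσ : σ⁻¹ = σ) : (1 - σ.permMatrix ℂ).PosSemidef := by
  have := Fintype.ofFinite ι
  set P := σ.permMatrix ℂ
  have hPstar : Pᴴ = P := by rw [Matrix.conjTranspose_permMatrix, hσ]
  have hPsq : P * P = 1 := by
    rw [← Matrix.permMatrix_mul, inv_eq_iff_mul_eq_one.mp hσ, Matrix.permMatrix_one]
  have hfactor : 1 - P = (2⁻¹ : ℝ) • ((1 - P)ᴴ * (1 - P)) := by
    rw [eq_inv_smul_iff₀ two_ne_zero, Matrix.conjTranspose_sub, Matrix.conjTranspose_one, hPstar,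
      two_smul, sub_mul, one_mul, mul_sub, mul_one, hPsq]
    abel
  rw [hfactor]
  exact (Matrix.posSemidef_conjTranspose_mul_self _).smul (by positivity : (0 : ℝ) ≤ 2⁻¹)

theorem trace_mul_permMatrix_le [Fintype ι] [DecidableEq ι] {A : Matrix ι ι ℂ}
    (hA : A.PosSemidef) {σ : Equiv.Perm ι} (hσ : σ⁻¹ = σ) :
    (A * σ.permMatrix ℂ).trace ≤ A.trace := by
  have h := trace_mul_nonneg_of_posSemidef hA (posSemidef_one_sub_permMatrix hσ)
  rwa [mul_sub, mul_one, Matrix.trace_sub, sub_nonneg] at h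

end Positivity

section SICDistribution

open scoped ComplexOrder

variable {n : ℕ} {ρ : QMat n}

/-- `ρ` is the density matrix of an `n`-qubit state, pure or mixed. -/
structure IsDensityMatrix (ρ : QMat n) : Prop where
  posSemidef : ρ.PosSemidef
  trace_eq_one : ρ.trace = 1

theorem isDensityMatrix_vecMulVec_self_star {ψ : (Fin n → Fin 2) → ℂ}
    (hψ : ∑ x, star (ψ x) * ψ x = 1) : IsDensityMatrix (vecMulVec ψ (star ψ)) where
  posSemidef := Matrix.posSemidef_vecMulVec_self_star ψ
  trace_eq_one := by
    simpa only [Matrix.trace_vecMulVec, dotProduct, Pi.star_apply, mul_comm] using hψ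

theorem sicProj_posSemidef (S : Finset (Fin n)) (q : {i : Fin n // i ∈ S} → Fin 4) :
    (sicProj S q).PosSemidef :=
  localOp_posSemidef fun _ => Matrix.posSemidef_vecMulVec_self_star _

theorem sum_sicProj (S : Finset (Fin n)) : ∑ q, sicProj S q = 1 := by
  rw [← localOp_one (S := S), ← sum_sicEffect]
  exact sum_localOp sicEffect

theorem ofReal_sicBorn (hρ : ρ.PosSemidef) (S : Finset (Fin n))
    (q : {i : Fin n // i ∈ S} → Fin 4) : (sicBorn ρ S q : ℂ) = (ρ * sicProj S q).trace :=
  Complex.conj_eq_iff_re.mp <| Complex.conj_eq_iff_im.mpr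
    (Complex.nonneg_iff.mp (trace_mul_nonneg_of_posSemidef hρ (sicProj_posSemidef S q))).2.symm

theorem sicBorn_nonneg (hρ : ρ.PosSemidef) (S : Finset (Fin n))
    (q : {i : Fin n // i ∈ S} → Fin 4) : 0 ≤ sicBorn ρ S q :=
  (Complex.nonneg_iff.mp (trace_mul_nonneg_of_posSemidef hρ (sicProj_posSemidef S q))).1

theorem sum_sicBorn (ρ : QMat n) (S : Finset (Fin n)) :
    ∑ q, sicBorn ρ S q = ρ.trace.re := by
  simp only [sicBorn, ← Complex.re_sum, ← Matrix.trace_sum, ← Matrix.mul_sum, sum_sicProj, mul_one]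

theorem CE_eq_one_sub_sum_sicBorn_sq (hρ : ρ.PosSemidef) (S : Finset (Fin n)) :
    CE ρ S = 1 - 3 ^ S.card * ∑ q, sicBorn ρ S q ^ 2 := by
  have hcollision : ((∑ q, sicBorn ρ S q ^ 2 : ℝ) : ℂ) =
      ((1 / 6 : ℝ) ^ S.card : ℝ) * ∑ α ∈ S.powerset, (reduced ρ α * reduced ρ α).trace := by
    have hdesign := sum_trace_mul_localOp_sq ρ S sum_sicEffect_kronecker
    push_cast
    simp only [ofReal_sicBorn hρ]
    exact hdesign
  have hre := congrArg Complex.re hcollision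
  rw [Complex.ofReal_re, Complex.re_ofReal_mul, Complex.re_sum] at hre
  rw [CE, hre, ← mul_assoc, ← mul_pow]
  norm_num

theorem trace_reduced_sq_le_one (hρ : IsDensityMatrix ρ) (α : Finset (Fin n)) :
    (reduced ρ α * reduced ρ α).trace ≤ 1 := by
  calc (reduced ρ α * reduced ρ α).trace
      = ((ρ ⊗ₖ ρ) * (partialSwap α).permMatrix ℂ).trace :=
        (trace_kronecker_mul_partialSwap ρ α).symm
    _ ≤ (ρ ⊗ₖ ρ).trace := trace_mul_permMatrix_le
        (hρ.posSemidef.kronecker hρ.posSemidef) (partialSwap_symm α)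
    _ = 1 := by rw [Matrix.trace_kronecker, hρ.trace_eq_one, mul_one]

theorem CE_nonneg (hρ : IsDensityMatrix ρ) (S : Finset (Fin n)) : 0 ≤ CE ρ S := by
  have hpurity : ∑ α ∈ S.powerset, (reduced ρ α * reduced ρ α).trace.re ≤ 2 ^ S.card := by
    calc ∑ α ∈ S.powerset, (reduced ρ α * reduced ρ α).trace.re
        ≤ ∑ _α ∈ S.powerset, 1 := Finset.sum_le_sum fun α _ =>
          (Complex.le_def.mp (trace_reduced_sq_le_one hρ α)).1
      _ = 2 ^ S.card := by simp
  rw [CE, sub_nonneg, one_div, inv_pow]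
  exact inv_mul_le_one_of_le₀ hpurity (by positivity)

theorem sicMeasure_real_singleton (hρ : ρ.PosSemidef) (S : Finset (Fin n))
    (q : {i : Fin n // i ∈ S} → Fin 4) : (sicMeasure ρ S).real {q} = sicBorn ρ S q := by
  rw [measureReal_def, sicMeasure, Measure.finsetSum_apply, Finset.sum_eq_single q]
  · simp [sicBorn_nonneg hρ]
  · intro p _ hpq
    simp [hpq]
  · simp

theorem isProbabilityMeasure_sicMeasure (hρ : IsDensityMatrix ρ)
    (S : Finset (Fin n)) : IsProbabilityMeasure (sicMeasure ρ S) := by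
  refine ⟨?_⟩
  simp only [sicMeasure, Measure.finsetSum_apply, Measure.smul_apply, measure_univ, smul_eq_mul,
    mul_one]
  rw [← ENNReal.ofReal_sum_of_nonneg fun q _ => sicBorn_nonneg hρ.posSemidef S q, sum_sicBorn,
    hρ.trace_eq_one, Complex.one_re, ENNReal.ofReal_one]

theorem collisionProb_sicMeasure (hρ : ρ.PosSemidef) (S : Finset (Fin n)) :
    collisionProb (sicMeasure ρ S) = ∑ q, sicBorn ρ S q ^ 2 := by
  simp only [collisionProb, sicMeasure_real_singleton hρ]

end SICDistribution

open ProbabilityTheory in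
theorem SIC_MoM_estimator_K2_general {Ω : Type*} {mΩ : MeasurableSpace Ω} {μ : Measure Ω} {n : ℕ}
    {ρ : QMat n} (hρ : IsDensityMatrix ρ) (S : Finset (Fin n)) {ε δ : ℝ}
    (hε : 0 < ε) (hδ : 0 < δ) {NB B : ℕ} (hNB : 8 * Real.log (1 / δ) ≤ NB)
    (hB : 4 * (3 : ℝ) ^ S.card / ε ^ 2 ≤ B)
    {Q : Fin NB × Fin B × Fin 2 → Ω → ({i : Fin n // i ∈ S} → Fin 4)}
    (hQ : ∀ p, Measurable (Q p)) (hlaw : ∀ p, HasLaw (Q p) (sicMeasure ρ S) μ)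
    (hindep : iIndepFun Q μ) {m : Ω → ℝ}
    (hm : ∀ ω, IsMedian (fun b => collisionEstimate (3 ^ S.card) fun p => Q (b, p) ω) (m ω)) :
    μ {ω | ε ≤ |m ω - CE ρ S|} ≤ ENNReal.ofReal δ := by
  have := hindep.isProbabilityMeasure
  have hCE : CE ρ S = 1 - 3 ^ S.card * collisionProb (sicMeasure ρ S) := by
    rw [CE_eq_one_sub_sum_sicBorn_sq hρ.posSemidef, collisionProb_sicMeasure hρ.posSemidef]
  have hcollision : 3 ^ S.card * collisionProb (sicMeasure ρ S) ≤ 1 :=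
    sub_nonneg.mp (hCE ▸ CE_nonneg hρ S)
  rw [← ofReal_measureReal, hCE]
  refine ENNReal.ofReal_le_ofReal ?_
  calc μ.real {ω | ε ≤ |m ω - (1 - 3 ^ S.card * collisionProb (sicMeasure ρ S))|}
      ≤ Real.exp (-(NB / 8)) := measureReal_abs_median_collisionEstimate_sub_ge_le
        (by positivity) hε hB hcollision hQ hlaw hindep hm
    _ ≤ Real.exp (Real.log δ) := by
        rw [one_div, Real.log_inv] at hNB
        exact Real.exp_le_exp.mpr (by linarith)
    _ = δ := Real.exp_log hδ

/-- **CE estimation via SIC data and median-of-means (`K = 2`)**: with `N_B = ⌈8 log(1/δ)⌉`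
batches of `B = ⌈4·3^s/ε²⌉` pairs of i.i.d. SIC outcomes, any median of the batch means is
`ε`-close to `C_ψ(S)` with probability at least `1 - δ`. -/
theorem SIC_MoM_estimator_K2 (n : ℕ) (ψ : (Fin n → Fin 2) → ℂ)
    (hψ : (∑ x, star (ψ x) * ψ x) = 1)
    (S : Finset (Fin n)) (hS : S.Nonempty)
    (ε δ : ℝ) (hε : 0 < ε) (hδ0 : 0 < δ) (hδ1 : δ < 1) (NB B : ℕ)
    (hNB : NB = ⌈8 * Real.log (1 / δ)⌉₊)
    (hB : B = ⌈4 * (3 : ℝ) ^ S.card / ε ^ 2⌉₊)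
    (med : (Fin NB → ℝ) → ℝ) (hmed : ∀ x, IsMedian x (med x)) :
    (Measure.pi fun _ : Fin NB × Fin B × Fin 2 =>
        sicMeasure (Matrix.vecMulVec ψ (star ψ)) S)
      {ω | ε ≤ |med (fun b => 1 - (3 : ℝ) ^ S.card *
              ((1 / (B : ℝ)) * ∑ i : Fin B, if ω (b, i, 0) = ω (b, i, 1) then 1 else 0))
            - CE (Matrix.vecMulVec ψ (star ψ)) S|}
      ≤ ENNReal.ofReal δ := by
  have hρ := isDensityMatrix_vecMulVec_self_star hψ
  have := isProbabilityMeasure_sicMeasure hρ S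
  exact SIC_MoM_estimator_K2_general hρ S hε hδ0 (hNB ▸ Nat.le_ceil _) (hB ▸ Nat.le_ceil _)
    measurable_pi_apply (fun p => (measurePreserving_eval (fun _ => sicMeasure _ S) p).hasLaw)
    (ProbabilityTheory.iIndepFun_pi fun _ => aemeasurable_id) fun _ => hmed _
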